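/- arXiv:1510.06548 — 2 statements merged into one kernel-verified Lean document; each statement's English description precedes it below -/
import Mathlib

section
/- Let b : ℝ → ℝ be a C^∞ function with b(θ+2π) = b(θ) + 2π and b′(θ) > 0 for all θ, and set ψ(θ) = e^{ib(θ)}, with Fourier coefficients ψ̂(k) = (1/2π)∫₀^{2π}ψ(θ)e^{−ikθ}dθ. Then ∑_{k∈ℤ} |k|·|ψ̂(k)|² = 1 if and only if there exists a function Ψ : ℂ → ℂ that is continuous on the closed unit disc {|z| ≤ 1}, holomorphic on the open unit disc {|z| < 1}, maps the open unit disc bijectively onto itself, and satisfies Ψ(e^{iθ}) = ψ(θ) for all θ ∈ ℝ. -/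
open MeasureTheory Real

noncomputable section

/-- The `k`-th Fourier coefficient of a `2π`-periodic function `u : ℝ → ℂ`:
`û(k) = (1/2π) ∫₀^{2π} u(θ) e^{-ikθ} dθ`. -/
def fCoef (u : ℝ → ℂ) (k : ℤ) : ℂ :=
  (2 * Real.pi)⁻¹ * ∫ θ in (0:ℝ)..(2 * Real.pi), u θ * Complex.exp (-Complex.I * k * θ)

lemma fCoef_deriv (γ : ℝ → ℂ) (hγ : ContDiff ℝ 1 γ) (hp : Function.Periodic γ (2 * π)) (k : ℤ) :
    fCoef (deriv γ) k = Complex.I * k * fCoef γ k := by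
  have hd : ∀ x, HasDerivAt γ (deriv γ x) x := fun x =>
    (hγ.differentiable (by norm_num) x).hasDerivAt
  have hc : Continuous (deriv γ) := hγ.continuous_deriv (by norm_num)
  have he : ∀ x : ℝ, HasDerivAt (fun θ : ℝ => Complex.exp (-Complex.I * k * θ))
      (Complex.exp (-Complex.I * k * x) * (-Complex.I * k)) x := by
    intro x
    have h1 : HasDerivAt (fun z : ℂ => Complex.exp (-Complex.I * k * z))
      (Complex.exp (-Complex.I * k * x) * (-Complex.I * k)) (x:ℂ) := by
      simpa using ((hasDerivAt_id (x:ℂ)).const_mul (-Complex.I * k)).cexp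
    exact h1.comp_ofReal
  have := intervalIntegral.integral_mul_deriv_eq_deriv_mul (a := 0) (b := 2 * π)
    (u := γ) (u' := deriv γ) (fun x _ => hd x) (fun x _ => he x)
    (hc.intervalIntegrable _ _) (Continuous.intervalIntegrable (by fun_prop) _ _)
  have hp0 : γ (2 * π) = γ 0 := by simpa using hp 0
  have he0 : Complex.exp (-Complex.I * k * ((2 * π : ℝ) : ℂ)) = 1 := by
    rw [Complex.exp_eq_one_iff]; exact ⟨-k, by push_cast; ring⟩
  rw [hp0, he0] at this
  simp only [Complex.ofReal_zero, mul_zero, Complex.exp_zero, sub_self, zero_sub] at this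
  unfold fCoef
  rw [eq_neg_iff_add_eq_zero, add_comm, ← eq_neg_iff_add_eq_zero] at this
  rw [this]
  simp_rw [← mul_assoc]
  rw [intervalIntegral.integral_mul_const, intervalIntegral.integral_mul_const]
  ring

lemma fCoef_bound (γ : ℝ → ℂ) : ∃ C, ∀ k, ‖fCoef γ k‖ ≤ C := by
  refine ⟨‖((2 * π)⁻¹ : ℂ)‖ * ∫ θ in (0:ℝ)..(2 * π), ‖γ θ‖, fun k => ?_⟩
  unfold fCoef
  rw [norm_mul]
  refine mul_le_mul (by simp) ?_ (norm_nonneg _) (norm_nonneg _)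
  refine (intervalIntegral.norm_integral_le_integral_norm (by positivity)).trans (le_of_eq ?_)
  congr 1; ext θ
  rw [norm_mul, Complex.norm_exp]; simp

lemma deriv_per (γ : ℝ → ℂ) (hp : Function.Periodic γ (2 * π)) :
    Function.Periodic (deriv γ) (2 * π) := by
  intro x
  rw [← deriv_comp_add_const]
  congr 1; ext y; exact hp y

lemma fCoef_decay (γ : ℝ → ℂ) (hγ : ContDiff ℝ 2 γ) (hp : Function.Periodic γ (2 * π)) :
    ∃ C, ∀ k : ℤ, (k:ℝ) ^ 2 * ‖fCoef γ k‖ ≤ C := by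
  have h1 : ContDiff ℝ 1 (deriv γ) := (contDiff_succ_iff_deriv (n := 1) |>.1 (by simpa [one_add_one_eq_two] using hγ)).2.2
  obtain ⟨C, hC⟩ := fCoef_bound (deriv (deriv γ))
  refine ⟨C, fun k => ?_⟩
  have := hC k
  rw [fCoef_deriv _ h1 (deriv_per _ hp), fCoef_deriv _ (hγ.of_le (by norm_num)) hp] at this
  simp only [norm_mul, Complex.norm_I, Complex.norm_intCast] at this
  rw [← sq_abs, ← Int.cast_abs] 
  simp only [Int.cast_abs] at *
  linarith

lemma fCoef_summable (γ : ℝ → ℂ) (hγ : ContDiff ℝ 2 γ) (hp : Function.Periodic γ (2 * π)) :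
    Summable (fun k => ‖fCoef γ k‖) := by
  obtain ⟨C, hC⟩ := fCoef_decay γ hγ hp
  have hs : Summable (fun k : ℤ => C * (1 / (k:ℝ) ^ 2)) :=
    (Real.summable_one_div_int_pow.2 (by norm_num)).mul_left C
  refine hs.of_norm_bounded_eventually ?_
  have : {(0:ℤ)}ᶜ ∈ Filter.cofinite := (Set.finite_singleton (0:ℤ)).compl_mem_cofinite
  filter_upwards [this] with k hk
  have hk' : (0:ℝ) < (k:ℝ) ^ 2 := by
    have : (k:ℝ) ≠ 0 := by exact_mod_cast hk
    positivity
  rw [norm_norm, mul_one_div, le_div_iff₀ hk']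
  linarith [hC k]

lemma fCoef_wsummable (γ : ℝ → ℂ) (hγ : ContDiff ℝ 2 γ) (hp : Function.Periodic γ (2 * π)) :
    Summable (fun k : ℤ => |(k:ℝ)| * ‖fCoef γ k‖ ^ 2) := by
  obtain ⟨C, hC⟩ := fCoef_decay γ hγ hp
  refine Summable.of_nonneg_of_le (fun k => by positivity) (fun k => ?_)
    ((fCoef_summable γ hγ hp).mul_left C)
  have h1 : |(k:ℝ)| ≤ (k:ℝ)^2 := by
    rw [← sq_abs]
    exact_mod_cast Int.le_self_sq |k|
  calc _ ≤ (k:ℝ)^2 * ‖fCoef γ k‖ ^ 2 := by gcongr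
    _ = ((k:ℝ)^2 * ‖fCoef γ k‖) * ‖fCoef γ k‖ := by ring
    _ ≤ _ := by gcongr; exact hC k

lemma fCoef_hasSum_of (γ : ℝ → ℂ) (hγ : Continuous γ) (hp : Function.Periodic γ (2 * π))
    (hs : Summable (fun k => ‖fCoef γ k‖)) (θ : ℝ) :
    HasSum (fun k : ℤ => fCoef γ k * Complex.exp (Complex.I * k * θ)) (γ θ) := by
  have : Fact (0 < 2 * π) := ⟨by positivity⟩
  let f : C(AddCircle (2 * π), ℂ) := ⟨hp.lift, continuous_coinduced_dom.mpr hγ⟩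
  have hf : ∀ x : ℝ, f (x : AddCircle (2 * π)) = γ x := fun x => rfl
  have hpi : (π : ℂ) ≠ 0 := by exact_mod_cast Real.pi_ne_zero
  have hco : fourierCoeff f = fCoef γ := by
    ext k
    rw [fourierCoeff_eq_intervalIntegral _ _ 0]
    unfold fCoef
    rw [zero_add, Complex.real_smul]
    congr 1
    · push_cast; simp
    · congr 1; ext x
      rw [hf, smul_eq_mul, mul_comm, fourier_coe_apply]
      congr 2
      push_cast
      field_simp
  have h := has_pointwise_sum_fourier_series_of_summable (f := f) (by rw [hco]; exact hs.of_norm) (θ : AddCircle (2*π))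
  rw [hco, hf] at h
  convert h using 2 with k
  rw [smul_eq_mul, fourier_coe_apply]
  congr 2
  push_cast
  field_simp

lemma hasSum_congr_aux {f g : ℤ → ℂ} {s : ℂ} (hg : HasSum g s) (h : ∀ k, f k = g k) :
    HasSum f s := by
  rw [funext h]; exact hg

lemma fCoef_parseval (γ : ℝ → ℂ) (hγ : ContDiff ℝ 2 γ) (hp : Function.Periodic γ (2 * π)) :
    HasSum (fun k : ℤ => (((k:ℝ) * ‖fCoef γ k‖ ^ 2 : ℝ) : ℂ))
      (-Complex.I * ((2 * π)⁻¹ * ∫ θ in (0:ℝ)..(2 * π), deriv γ θ * (starRingEnd ℂ) (γ θ))) := by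
  have hs := fCoef_summable γ hγ hp
  have hc : Continuous (deriv γ) := hγ.continuous_deriv (by norm_num)
  have key : HasSum (fun k : ℤ => ∫ θ in (0:ℝ)..(2 * π),
      deriv γ θ * (starRingEnd ℂ) (fCoef γ k * Complex.exp (Complex.I * k * θ)))
      (∫ θ in (0:ℝ)..(2 * π), deriv γ θ * (starRingEnd ℂ) (γ θ)) := by
    refine intervalIntegral.hasSum_integral_of_dominated_convergence
      (fun k θ => ‖deriv γ θ‖ * ‖fCoef γ k‖) ?_ ?_ ?_ ?_ ?_
    · intro k
      exact Continuous.aestronglyMeasurable (by fun_prop)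
    · intro k
      refine Filter.Eventually.of_forall fun θ _ => ?_
      rw [norm_mul, RCLike.norm_conj, norm_mul, Complex.norm_exp]; simp
    · exact Filter.Eventually.of_forall fun θ _ => hs.mul_left _
    · simp_rw [tsum_mul_left]
      exact Continuous.intervalIntegrable (by fun_prop) _ _
    · refine Filter.Eventually.of_forall fun θ _ => ?_
      refine HasSum.mul_left _ ?_
      exact (fCoef_hasSum_of γ hγ.continuous hp hs θ).map (starRingEnd ℂ) Complex.continuous_conj
  have k2 := (key.mul_left ((2 * π)⁻¹ : ℂ)).mul_left (-Complex.I)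
  rw [show (((2 * π)⁻¹ : ℝ) : ℂ) = (2 * (π : ℂ))⁻¹ by push_cast; rfl]
  refine hasSum_congr_aux k2 fun k => ?_
  have hd := fCoef_deriv γ (hγ.of_le (by norm_num)) hp k
  have : ∀ θ : ℝ, deriv γ θ * (starRingEnd ℂ) (fCoef γ k * Complex.exp (Complex.I * k * θ)) =
     (starRingEnd ℂ) (fCoef γ k) * (deriv γ θ * Complex.exp (-Complex.I * k * θ)) := by
    intro θ
    rw [map_mul, ← Complex.exp_conj]; simp; ring
  simp_rw [this]
  rw [intervalIntegral.integral_const_mul]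
  have h2 : ((2 * π)⁻¹ : ℂ) * ∫ θ in (0:ℝ)..(2 * π), deriv γ θ * Complex.exp (-Complex.I * k * θ) = fCoef (deriv γ) k := by
    unfold fCoef; push_cast; rfl
  rw [mul_left_comm _ ((starRingEnd ℂ) _), h2, hd]
  have h3 := Complex.mul_conj' (fCoef γ k)
  push_cast
  rw [← h3]
  linear_combination ((k:ℂ) * fCoef γ k * (starRingEnd ℂ) (fCoef γ k)) * Complex.I_sq

lemma fCoef_neg (F : ℂ → ℂ) (hF : DiffContOnCl ℂ F (Metric.ball 0 1)) (γ : ℝ → ℂ)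
    (h : ∀ θ : ℝ, F (Complex.exp (Complex.I * θ)) = γ θ) (k : ℤ) (hk : k < 0) :
    fCoef γ k = 0 := by
  obtain ⟨n, rfl⟩ : ∃ n : ℕ, k = -(n + 1 : ℤ) := ⟨(-k - 1).toNat, by omega⟩
  have hG : DiffContOnCl ℂ (fun z => z ^ n * F z) (Metric.ball 0 1) :=
    DiffContOnCl.smul (f := F) (c := fun z : ℂ => z ^ n) (Differentiable.diffContOnCl (by fun_prop)) hF
  have h0 := hG.circleIntegral_eq_zero zero_le_one
  rw [circleIntegral] at h0
  unfold fCoef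
  have : ∀ θ : ℝ, γ θ * Complex.exp (-Complex.I * ((-(n + 1 : ℤ) : ℤ) : ℂ) * θ) =
     -Complex.I * (deriv (circleMap 0 1) θ • ((circleMap 0 1 θ) ^ n * F (circleMap 0 1 θ))) := by
    intro θ
    have e : circleMap 0 1 θ = Complex.exp (Complex.I * θ) := by simp [circleMap, mul_comm]
    rw [deriv_circleMap, e, h, smul_eq_mul, ← Complex.exp_nat_mul]
    have : Complex.exp (-Complex.I * ((-(n + 1 : ℤ) : ℤ) : ℂ) * θ) = Complex.exp (Complex.I * θ) *
      Complex.exp (n * (Complex.I * θ)) := by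
      rw [← Complex.exp_add]; congr 1; push_cast; ring
    rw [this]
    linear_combination (Complex.exp (Complex.I * θ) *
      Complex.exp (n * (Complex.I * θ)) * γ θ) * Complex.I_sq
  simp_rw [this]
  rw [intervalIntegral.integral_const_mul, h0]; simp

lemma wind_exp (β : ℝ → ℝ) (hβ : ContDiff ℝ 2 β) (n : ℤ)
    (hper : ∀ θ, β (θ + 2 * π) = β θ + 2 * π * n) (γ : ℝ → ℂ)
    (hγ : ∀ θ, γ θ = Complex.exp (Complex.I * β θ)) :
    ContDiff ℝ 2 γ ∧ Function.Periodic γ (2 * π) ∧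
    (∀ θ, deriv γ θ * (starRingEnd ℂ) (γ θ) = Complex.I * (deriv β θ : ℝ)) ∧
    HasSum (fun k : ℤ => (k:ℝ) * ‖fCoef γ k‖ ^ 2) n := by
  have hfun : γ = fun θ => Complex.exp (Complex.I * β θ) := funext hγ
  have hC : ContDiff ℝ 2 γ := by
    rw [hfun]
    have h1 : ContDiff ℝ 2 (fun θ => (β θ : ℂ)) := Complex.ofRealCLM.contDiff.comp hβ
    exact (contDiff_const.mul h1).cexp
  have hP : Function.Periodic γ (2 * π) := by
    intro θ
    rw [hγ, hγ, hper, Complex.exp_eq_exp_iff_exists_int]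
    exact ⟨n, by push_cast; ring⟩
  have hD : ∀ θ, deriv γ θ * (starRingEnd ℂ) (γ θ) = Complex.I * (deriv β θ : ℝ) := by
    intro θ
    have h1 : HasDerivAt β (deriv β θ) θ := (hβ.differentiable (by norm_num) θ).hasDerivAt
    have h2 : HasDerivAt γ (Complex.exp (Complex.I * β θ) * (Complex.I * (deriv β θ : ℝ))) θ := by
      rw [hfun]
      exact (h1.ofReal_comp.const_mul Complex.I).cexp
    rw [h2.deriv, hγ, ← Complex.exp_conj]
    have : Complex.exp (Complex.I * β θ) * Complex.exp ((starRingEnd ℂ) (Complex.I * β θ)) = 1 := by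
      rw [← Complex.exp_add]; simp
    linear_combination (Complex.I * (deriv β θ : ℝ)) * this
  refine ⟨hC, hP, hD, ?_⟩
  have h := fCoef_parseval γ hC hP
  simp_rw [hD] at h
  rw [intervalIntegral.integral_const_mul, intervalIntegral.integral_ofReal,
    intervalIntegral.integral_deriv_eq_sub (fun x _ => hβ.differentiable (by norm_num) x)
      ((hβ.continuous_deriv (by norm_num)).intervalIntegrable _ _)] at h
  have h0 := hper 0
  rw [zero_add] at h0
  have hv : -Complex.I * ((2 * π)⁻¹ * (Complex.I * ((β (2 * π) - β 0 : ℝ) : ℂ))) = ((n : ℝ) : ℂ) := by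
    rw [h0]
    have hpi : (π : ℂ) ≠ 0 := by exact_mod_cast Real.pi_ne_zero
    simp only [Complex.ofReal_inv, Complex.ofReal_mul, Complex.ofReal_sub, Complex.ofReal_add,
      Complex.ofReal_ofNat]
    rw [add_sub_cancel_left]
    field_simp
    push_cast
    linear_combination (-n * Complex.I_sq)
  rw [hv] at h
  exact Complex.hasSum_ofReal.1 h

lemma sphere_exp (z : ℂ) (hz : ‖z‖ = 1) : ∃ θ : ℝ, z = Complex.exp (Complex.I * θ) := by
  refine ⟨z.arg, ?_⟩
  have := Complex.norm_mul_exp_arg_mul_I z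
  rw [hz] at this
  rw [mul_comm]; simpa using this.symm

lemma exists_ext (γ : ℝ → ℂ) (hγ : ContDiff ℝ 2 γ) (hp : Function.Periodic γ (2 * π))
    (h : ∀ k : ℤ, k < 0 → fCoef γ k = 0) :
    ∃ F : ℂ → ℂ, ContinuousOn F (Metric.closedBall 0 1) ∧
      DifferentiableOn ℂ F (Metric.ball 0 1) ∧
      ∀ θ : ℝ, F (Complex.exp (Complex.I * θ)) = γ θ := by
  have hs := fCoef_summable γ hγ hp
  have hs' : Summable (fun n : ℕ => ‖fCoef γ n‖) :=
    hs.comp_injective (i := fun n : ℕ => (n : ℤ)) Nat.cast_injective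
  have hb : ∀ (n : ℕ) (z : ℂ), z ∈ Metric.closedBall (0:ℂ) 1 →
      ‖fCoef γ n * z ^ n‖ ≤ ‖fCoef γ n‖ := by
    intro n z hz
    rw [norm_mul, norm_pow]
    exact mul_le_of_le_one_right (norm_nonneg _) (pow_le_one₀ (norm_nonneg _) (by simpa using hz))
  refine ⟨fun z => ∑' n : ℕ, fCoef γ n * z ^ n, ?_, ?_, ?_⟩
  · exact continuousOn_tsum (fun n => by fun_prop) hs' hb
  · exact Complex.differentiableOn_tsum_of_summable_norm hs' (fun n => by fun_prop) Metric.isOpen_ball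
      (fun n z hz => hb n z (Metric.ball_subset_closedBall hz))
  · intro θ
    have h1 := fCoef_hasSum_of γ hγ.continuous hp hs θ
    have h2 := (Function.Injective.hasSum_iff (g := fun n : ℕ => (n : ℤ)) Nat.cast_injective (by
      intro k hk
      have : k < 0 := by
        by_contra hk'
        exact hk ⟨k.toNat, by simp; omega⟩
      rw [h k this, zero_mul])).2 h1
    rw [← h2.tsum_eq]
    refine tsum_congr fun n => ?_
    simp only [Function.comp]
    rw [← Complex.exp_nat_mul]
    push_cast
    congr 2; ring

lemma one_sub_ne (a z : ℂ) (ha : ‖a‖ < 1) (hz : ‖z‖ ≤ 1) : 1 - (starRingEnd ℂ) a * z ≠ 0 := by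
  intro h
  have : (starRingEnd ℂ) a * z = 1 := by linear_combination -h
  have h2 := congrArg norm this
  rw [norm_mul, RCLike.norm_conj, norm_one] at h2
  nlinarith [norm_nonneg a, norm_nonneg z]

lemma mob_maps (a z : ℂ) (ha : ‖a‖ < 1) (hz : ‖z‖ < 1) :
    ‖(z - a) / (1 - (starRingEnd ℂ) a * z)‖ < 1 := by
  have hne := one_sub_ne a z ha hz.le
  rw [norm_div, div_lt_one (norm_pos_iff.2 hne)]
  have h1 : ‖z - a‖ ^ 2 < ‖1 - (starRingEnd ℂ) a * z‖ ^ 2 := by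
    have e : ‖1 - (starRingEnd ℂ) a * z‖ ^ 2 - ‖z - a‖ ^ 2 = (1 - ‖a‖ ^ 2) * (1 - ‖z‖ ^ 2) := by
      simp only [← Complex.normSq_eq_norm_sq, Complex.normSq_apply]
      simp; ring
    have : 0 < (1 - ‖a‖ ^ 2) * (1 - ‖z‖ ^ 2) := by
      apply mul_pos <;> nlinarith [norm_nonneg a, norm_nonneg z]
    linarith
  exact lt_of_pow_lt_pow_left₀ 2 (norm_nonneg _) h1

lemma mob_inv (a z : ℂ) (ha : ‖a‖ < 1) (hz : ‖z‖ < 1) :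
    ((z - a) / (1 - (starRingEnd ℂ) a * z) + a) /
      (1 + (starRingEnd ℂ) a * ((z - a) / (1 - (starRingEnd ℂ) a * z))) = z := by
  have hne := one_sub_ne a z ha hz.le
  have hne2 := one_sub_ne a a ha ha.le
  have e1 : (z - a) / (1 - (starRingEnd ℂ) a * z) + a =
    z * (1 - (starRingEnd ℂ) a * a) / (1 - (starRingEnd ℂ) a * z) := by
    rw [div_add' _ _ _ hne]; congr 1; ring
  have e2 : 1 + (starRingEnd ℂ) a * ((z - a) / (1 - (starRingEnd ℂ) a * z)) =
    (1 - (starRingEnd ℂ) a * a) / (1 - (starRingEnd ℂ) a * z) := by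
    rw [← mul_div_assoc, add_div' _ _ _ hne]; congr 1; ring
  rw [e1, e2, div_div_div_cancel_right₀ hne, mul_div_cancel_right₀ _ hne2]

lemma mob_bij (a c : ℂ) (ha : ‖a‖ < 1) (hc : ‖c‖ = 1) :
    Set.BijOn (fun z => c * ((z - a) / (1 - (starRingEnd ℂ) a * z)))
      (Metric.ball 0 1) (Metric.ball 0 1) := by
  have hc0 : c ≠ 0 := by rw [← norm_pos_iff, hc]; norm_num
  have ha' : ‖-a‖ < 1 := by simpa using ha
  refine Set.InvOn.bijOn (f' := fun w => (c⁻¹ * w + a) / (1 + (starRingEnd ℂ) a * (c⁻¹ * w)))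
    ⟨?_, ?_⟩ ?_ ?_
  · intro z hz
    simp only [inv_mul_cancel_left₀ hc0]
    exact mob_inv a z ha (by simpa using hz)
  · intro w hw
    have := mob_inv (-a) (c⁻¹ * w) ha' (by simpa [hc] using hw)
    simp only [map_neg, neg_mul, sub_neg_eq_add, ← sub_eq_add_neg] at this
    simp only [this, mul_inv_cancel_left₀ hc0]
  · intro z hz
    have := mob_maps a z ha (by simpa using hz)
    rw [mem_ball_zero_iff, norm_mul, hc, one_mul]; exact this
  · intro w hw
    have := mob_maps (-a) (c⁻¹ * w) ha' (by simpa [hc] using hw)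
    simp only [map_neg, neg_mul, sub_neg_eq_add] at this
    rw [mem_ball_zero_iff]; exact this

/-- The boundary function `m` of an inverse Moebius map has winding number `-1`. -/
lemma mob_wind (a : ℂ) (ha : ‖a‖ < 1) (m : ℝ → ℂ)
    (hm : ∀ θ : ℝ, m θ = (1 - (starRingEnd ℂ) a * Complex.exp (Complex.I * θ)) /
      (Complex.exp (Complex.I * θ) - a)) :
    ContDiff ℝ 2 m ∧ Function.Periodic m (2 * π) ∧ (∀ θ, m θ * (starRingEnd ℂ) (m θ) = 1) ∧
    ∫ θ in (0:ℝ)..(2 * π), deriv m θ * (starRingEnd ℂ) (m θ) = -(2 * π * Complex.I) := by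
  have hfun : m = fun θ : ℝ => (1 - (starRingEnd ℂ) a * Complex.exp (Complex.I * θ)) /
      (Complex.exp (Complex.I * θ) - a) := funext hm
  have hn : ∀ θ : ℝ, ‖Complex.exp (Complex.I * θ)‖ = 1 := by
    intro θ; rw [Complex.norm_exp]; simp
  have hne1 : ∀ θ : ℝ, 1 - (starRingEnd ℂ) a * Complex.exp (Complex.I * θ) ≠ 0 :=
    fun θ => one_sub_ne a _ ha (hn θ).le
  have hne2 : ∀ θ : ℝ, Complex.exp (Complex.I * θ) - a ≠ 0 := by
    intro θ h
    rw [sub_eq_zero] at h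
    rw [← h, hn] at ha; exact lt_irrefl _ ha
  have hE : ContDiff ℝ 2 (fun θ : ℝ => Complex.exp (Complex.I * θ)) :=
    (contDiff_const.mul Complex.ofRealCLM.contDiff).cexp
  have hU : ∀ θ, m θ * (starRingEnd ℂ) (m θ) = 1 := by
    intro θ
    have h1 : Complex.exp (Complex.I * θ) * (starRingEnd ℂ) (Complex.exp (Complex.I * θ)) = 1 := by
      rw [Complex.mul_conj', hn]; simp
    have h2 : (starRingEnd ℂ) (Complex.exp (Complex.I * θ) - a) ≠ 0 :=
      (map_ne_zero _).2 (hne2 θ)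
    rw [hm, map_div₀, div_mul_div_comm, div_eq_one_iff_eq (mul_ne_zero (hne2 θ) h2)]
    simp only [map_sub, map_mul, map_one, Complex.conj_conj]
    linear_combination ((starRingEnd ℂ) a * a - 1) * h1
  refine ⟨?_, ?_, hU, ?_⟩
  · rw [hfun]
    simp only [div_eq_mul_inv]
    exact (contDiff_const.sub (contDiff_const.mul hE)).mul ((hE.sub contDiff_const).inv hne2)
  · intro θ
    have : Complex.exp (Complex.I * ((θ + 2 * π : ℝ) : ℂ)) = Complex.exp (Complex.I * θ) := by
      rw [Complex.exp_eq_exp_iff_exists_int]; exact ⟨1, by push_cast; ring⟩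
    rw [hm, hm, this]
  · have hd : ∀ θ : ℝ, deriv m θ * (starRingEnd ℂ) (m θ) =
        deriv (circleMap 0 1) θ • (-(starRingEnd ℂ) a * (1 - (starRingEnd ℂ) a * circleMap 0 1 θ)⁻¹)
        - deriv (circleMap 0 1) θ • (circleMap 0 1 θ - a)⁻¹ := by
      intro θ
      have e : circleMap 0 1 θ = Complex.exp (Complex.I * θ) := by simp [circleMap, mul_comm]
      have hed : HasDerivAt (fun θ : ℝ => Complex.exp (Complex.I * θ))
          (Complex.exp (Complex.I * θ) * (Complex.I * (1 : ℂ))) θ :=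
        ((hasDerivAt_id θ).ofReal_comp.const_mul Complex.I).cexp
      have hmd := ((hed.const_mul ((starRingEnd ℂ) a)).const_sub 1).fun_div (hed.sub_const a) (hne2 θ)
      rw [← hfun] at hmd
      have hi : (starRingEnd ℂ) (m θ) = (m θ)⁻¹ := eq_inv_of_mul_eq_one_right (hU θ)
      rw [hi, hmd.deriv, deriv_circleMap, e, hm]
      have := hne1 θ
      have := hne2 θ
      simp only [smul_eq_mul]
      field_simp
    have hmem : a ∈ Metric.ball (0:ℂ) 1 := by simpa using ha
    have i1 : ∮ z in C(0, 1), (-(starRingEnd ℂ) a * (1 - (starRingEnd ℂ) a * z)⁻¹) = 0 := by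
      apply DiffContOnCl.circleIntegral_eq_zero zero_le_one
      apply DifferentiableOn.diffContOnCl
      rw [closure_ball _ one_ne_zero]
      intro z hz
      have := one_sub_ne a z ha (by simpa using hz)
      exact DifferentiableAt.differentiableWithinAt (by fun_prop (disch := assumption))
    have i2 := circleIntegral.integral_sub_inv_of_mem_ball hmem
    rw [circleIntegral] at i1 i2
    simp_rw [hd]
    rw [intervalIntegral.integral_sub, i1, i2, zero_sub]
    · have h3 : ∀ θ, 1 - (starRingEnd ℂ) a * circleMap 0 1 θ ≠ 0 := fun θ => 
        one_sub_ne a _ ha (by simp)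
      refine Continuous.intervalIntegrable ?_ _ _
      simp only [deriv_circleMap, smul_eq_mul]
      fun_prop (disch := assumption)
    · have h3 : ∀ θ, circleMap 0 1 θ - a ≠ 0 := by
        intro θ h
        rw [sub_eq_zero] at h
        rw [← h] at ha; simp at ha
      refine Continuous.intervalIntegrable ?_ _ _
      simp only [deriv_circleMap, smul_eq_mul]
      fun_prop (disch := assumption)

/-- **Lemma 2.5 of the paper.** For an orientation-preserving circle diffeomorphism
`ψ = e^{ib}` (with `b(θ+2π) = b(θ) + 2π`, `b' > 0`), one has `∑ₖ |k| |ψ̂(k)|² = 1`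
if and only if `ψ` is the boundary trace of a conformal transformation of the unit disc. -/
theorem quadratic_form_eq_one_iff_conformal
    (b : ℝ → ℝ) (hb : ContDiff ℝ (⊤ : ℕ∞) b)
    (hper : ∀ θ, b (θ + 2 * Real.pi) = b θ + 2 * Real.pi)
    (hb' : ∀ θ, 0 < deriv b θ)
    (ψ : ℝ → ℂ) (hψ : ∀ θ, ψ θ = Complex.exp (Complex.I * b θ)) :
    (∑' k : ℤ, |(k : ℝ)| * ‖fCoef ψ k‖ ^ 2 = 1) ↔
      ∃ Ψ : ℂ → ℂ,
        ContinuousOn Ψ (Metric.closedBall (0 : ℂ) 1) ∧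
        DifferentiableOn ℂ Ψ (Metric.ball (0 : ℂ) 1) ∧
        Set.BijOn Ψ (Metric.ball (0 : ℂ) 1) (Metric.ball (0 : ℂ) 1) ∧
        ∀ θ : ℝ, Ψ (Complex.exp (Complex.I * θ)) = ψ θ := by
  have hb2 : ContDiff ℝ 2 b := hb.of_le (by
    have : ((2 : ℕ∞) : WithTop ℕ∞) ≤ ((⊤ : ℕ∞) : WithTop ℕ∞) := WithTop.coe_le_coe.2 le_top
    exact this)
  obtain ⟨hC, hP, hD, hS⟩ := wind_exp b hb2 1 (by simpa using hper) ψ hψ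
  have hcl : closure (Metric.ball (0:ℂ) 1) = Metric.closedBall 0 1 := closure_ball _ one_ne_zero
  rw [Int.cast_one] at hS
  constructor
  · intro hsum
    have hA : HasSum (fun k : ℤ => |(k : ℝ)| * ‖fCoef ψ k‖ ^ 2) 1 := by
      rw [← hsum]; exact (fCoef_wsummable ψ hC hP).hasSum
    have hneg : ∀ k : ℤ, k < 0 → fCoef ψ k = 0 := by
      have hz := hA.sub hS
      rw [sub_self, hasSum_zero_iff_of_nonneg (by
        intro k
        have := le_abs_self (k:ℝ)
        simp only [← sub_mul]
        exact mul_nonneg (by linarith) (by positivity))] at hz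
      intro k hk
      have h1 := congrFun hz k
      have hk' : (k:ℝ) < 0 := by exact_mod_cast hk
      simp only [Pi.zero_apply, ← sub_mul, mul_eq_zero, abs_of_neg hk'] at h1
      rcases h1 with h1 | h1
      · linarith
      · simpa using h1
    obtain ⟨F, hFc, hFd, hFb⟩ := exists_ext ψ hC hP hneg
    have hFcl : DiffContOnCl ℂ F (Metric.ball 0 1) := ⟨hFd, by rw [hcl]; exact hFc⟩
    -- existence of a zero
    have hzero : ∃ a : ℂ, ‖a‖ < 1 ∧ F a = 0 := by
      by_contra! hno
      have hinv : DiffContOnCl ℂ F⁻¹ (Metric.ball 0 1) := by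
        refine hFcl.inv fun z hz => ?_
        rw [hcl, mem_closedBall_zero_iff] at hz
        rcases hz.lt_or_eq with h | h
        · exact hno z h
        · obtain ⟨θ, rfl⟩ := sphere_exp z h
          rw [hFb, hψ]; exact Complex.exp_ne_zero _
      obtain ⟨-, -, -, hS'⟩ := wind_exp (fun θ => -b θ) hb2.neg (-1)
        (by intro θ; simp only [hper]; push_cast; ring)
        (fun θ => Complex.exp (Complex.I * ((-b θ : ℝ) : ℂ))) (fun θ => rfl)
      have hn := fCoef_neg F⁻¹ hinv (fun θ => Complex.exp (Complex.I * ((-b θ : ℝ) : ℂ))) (by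
        intro θ
        simp only [Pi.inv_apply]
        rw [hFb, hψ, ← Complex.exp_neg]
        push_cast; congr 1; ring)
      have := hS'.nonneg (by
        intro k
        rcases lt_or_ge k 0 with hk | hk
        · rw [hn k hk]; simp
        · have : (0:ℝ) ≤ k := by exact_mod_cast hk
          positivity)
      norm_num at this
    obtain ⟨a, ha, hFa⟩ := hzero
    have hmem : a ∈ Metric.ball (0:ℂ) 1 := by simpa using ha
    obtain ⟨hmC, hmP, hmU, hmI⟩ := mob_wind a ha (fun θ : ℝ =>
      (1 - (starRingEnd ℂ) a * Complex.exp (Complex.I * θ)) /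
      (Complex.exp (Complex.I * θ) - a)) (fun θ => rfl)
    set m : ℝ → ℂ := fun θ : ℝ => (1 - (starRingEnd ℂ) a * Complex.exp (Complex.I * θ)) /
      (Complex.exp (Complex.I * θ) - a) with hm
    have hexpa : ∀ θ : ℝ, Complex.exp (Complex.I * θ) ≠ a := by
      intro θ h
      rw [← h, Complex.norm_exp] at ha
      simp at ha
    set γ : ℝ → ℂ := fun θ => ψ θ * m θ with hγ
    have hγC : ContDiff ℝ 2 γ := hC.mul hmC
    have hγP : Function.Periodic γ (2 * π) := hP.mul hmP
    have hψU : ∀ θ, ψ θ * (starRingEnd ℂ) (ψ θ) = 1 := by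
      intro θ
      rw [hψ, ← Complex.exp_conj, ← Complex.exp_add]; simp
    have hγneg : ∀ k : ℤ, k < 0 → fCoef γ k = 0 := by
      refine fCoef_neg (fun z => (1 - (starRingEnd ℂ) a * z) * dslope F a z) ?_ γ ?_
      · refine DiffContOnCl.smul (c := fun z : ℂ => 1 - (starRingEnd ℂ) a * z) (f := dslope F a)
          (Differentiable.diffContOnCl (by fun_prop)) ⟨?_, ?_⟩
        · exact (Complex.differentiableOn_dslope (Metric.isOpen_ball.mem_nhds hmem)).2 hFd
        · rw [hcl]
          exact (continuousOn_dslope (Filter.mem_of_superset (Metric.isOpen_ball.mem_nhds hmem)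
            Metric.ball_subset_closedBall)).2
            ⟨hFc, hFd.differentiableAt (Metric.isOpen_ball.mem_nhds hmem)⟩
      · intro θ
        simp only [hγ, hm]
        rw [dslope_of_ne _ (hexpa θ), slope_def_field, hFa, hFb]
        ring
    have hγS := fCoef_parseval γ hγC hγP
    have hγI : ∫ θ in (0:ℝ)..(2 * π), deriv γ θ * (starRingEnd ℂ) (γ θ) = 0 := by
      have e : ∀ θ, deriv γ θ * (starRingEnd ℂ) (γ θ) =
          deriv ψ θ * (starRingEnd ℂ) (ψ θ) + deriv m θ * (starRingEnd ℂ) (m θ) := by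
        intro θ
        have h1 := (hC.differentiable (by norm_num) θ).hasDerivAt
        have h2 := (hmC.differentiable (by norm_num) θ).hasDerivAt
        have h3 : deriv γ θ = _ := (h1.fun_mul h2).deriv
        rw [h3]
        simp only [hγ, map_mul]
        linear_combination (deriv ψ θ * (starRingEnd ℂ) (ψ θ)) * hmU θ +
          (deriv m θ * (starRingEnd ℂ) (m θ)) * hψU θ
      simp_rw [e]
      rw [intervalIntegral.integral_add, hmI]
      · simp_rw [hD]
        rw [intervalIntegral.integral_const_mul, intervalIntegral.integral_ofReal,
          intervalIntegral.integral_deriv_eq_sub (fun x _ => hb2.differentiable (by norm_num) x)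
            ((hb2.continuous_deriv (by norm_num)).intervalIntegrable _ _)]
        have h0 := hper 0
        rw [zero_add] at h0
        rw [h0]; push_cast; ring
      · have := hC.continuous_deriv (by norm_num)
        have := hC.continuous
        exact Continuous.intervalIntegrable (by fun_prop) _ _
      · have := hmC.continuous_deriv (by norm_num)
        have := hmC.continuous
        exact Continuous.intervalIntegrable (by fun_prop) _ _
    rw [hγI, mul_zero, mul_zero] at hγS
    have hγS' : HasSum (fun k : ℤ => (k:ℝ) * ‖fCoef γ k‖ ^ 2) 0 := by
      exact Complex.hasSum_ofReal.1 (by rw [Complex.ofReal_zero]; exact hγS)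
    rw [hasSum_zero_iff_of_nonneg (by
      intro k
      rcases lt_or_ge k 0 with hk | hk
      · simp [hγneg k hk]
      · have : (0:ℝ) ≤ k := by exact_mod_cast hk
        positivity)] at hγS'
    have hγ0 : ∀ k : ℤ, k ≠ 0 → fCoef γ k = 0 := by
      intro k hk
      have h1 := congrFun hγS' k
      simpa [hk] using h1
    have hconst : ∀ θ, γ θ = fCoef γ 0 := by
      intro θ
      have h1 := fCoef_hasSum_of γ hγC.continuous hγP (fCoef_summable γ hγC hγP) θ
      have h2 := hasSum_single (f := fun k : ℤ => fCoef γ k * Complex.exp (Complex.I * k * θ)) 0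
        (fun k hk => by simp only [hγ0 k hk, zero_mul])
      simpa using h1.unique h2
    set c := fCoef γ 0 with hc
    have hcn : ‖c‖ = 1 := by
      have h1 : γ 0 * (starRingEnd ℂ) (γ 0) = 1 := by
        simp only [hγ, map_mul]
        linear_combination (ψ 0 * (starRingEnd ℂ) (ψ 0)) * hmU 0 + hψU 0
      rw [hconst, Complex.mul_conj'] at h1
      have h2 : ‖c‖ ^ 2 = 1 := by exact_mod_cast h1
      exact (pow_eq_one_iff_of_nonneg (norm_nonneg _) two_ne_zero).1 h2
    have hdiff : DifferentiableOn ℂ (fun z => c * ((z - a) / (1 - (starRingEnd ℂ) a * z)))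
        (Metric.closedBall 0 1) := by
      intro z hz
      have := one_sub_ne a z ha (by simpa using hz)
      exact DifferentiableAt.differentiableWithinAt (by fun_prop (disch := assumption))
    refine ⟨fun z => c * ((z - a) / (1 - (starRingEnd ℂ) a * z)), hdiff.continuousOn,
      hdiff.mono Metric.ball_subset_closedBall, mob_bij a c ha hcn, ?_⟩
    intro θ
    have h1 := hconst θ
    have h2 : 1 - (starRingEnd ℂ) a * Complex.exp (Complex.I * θ) ≠ 0 :=
      one_sub_ne a _ ha (by rw [Complex.norm_exp]; simp)
    have h3 := sub_ne_zero.2 (hexpa θ)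
    simp only [← h1, hγ, hm]
    field_simp
  · rintro ⟨Ψ, hΨc, hΨd, -, hΨb⟩
    have hn := fCoef_neg Ψ ⟨hΨd, by rw [hcl]; exact hΨc⟩ ψ hΨb
    rw [← hS.tsum_eq]
    congr 1; ext k
    rcases lt_or_ge k 0 with hk | hk
    · simp [hn k hk]
    · have : (0:ℝ) ≤ k := by exact_mod_cast hk
      rw [abs_of_nonneg this]
end
end

section
/- Let a : ℝ → ℝ be a C^∞, 2π-periodic, strictly positive function and let k ≥ 1 be an integer. Then the series defining the zeta-invariant Z_k(a) converges absolutely, Z_k(a) is a real number, and Z_k(a) ≥ 0. -/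
open MeasureTheory Real

noncomputable section

/-- `prodPoly m j n = n(n+j₁)(n+j₁+j₂)⋯(n+j₁+⋯+j_{m-1})`. -/
def prodPoly (m : ℕ) (j : Fin m → ℤ) (n : ℤ) : ℤ :=
  ∏ i : Fin m, (n + ∑ l ∈ Finset.Iio i, j l)

/-- The coefficient `N_{j₁…j_m} = ∑ₙ (|n(n+j₁)⋯(n+j₁+⋯+j_{m-1})| - n(n+j₁)⋯(n+j₁+⋯+j_{m-1}))`;
only finitely many summands are nonzero. -/
def Ncoef (m : ℕ) (j : Fin m → ℤ) : ℝ :=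
  ∑' n : ℤ, ((|prodPoly m j n| - prodPoly m j n : ℤ) : ℝ)

/-- A term of the series defining the zeta-invariant `Z_k(a)`:
`N_{j₁…j_{2k}} â(j₁)⋯â(j_{2k})` for `j₁+⋯+j_{2k} = 0`. -/
def zetaTerm (k : ℕ) (a : ℝ → ℝ) (j : {j : Fin (2 * k) → ℤ // ∑ i, j i = 0}) : ℂ :=
  (Ncoef (2 * k) j.val : ℂ) * ∏ i, fCoef (fun θ => (a θ : ℂ)) (j.val i)

/-- The zeta-invariant `Z_k(a) = ∑_{j₁+⋯+j_{2k}=0} N_{j₁…j_{2k}} â(j₁)⋯â(j_{2k})`. -/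
def ZetaInv (k : ℕ) (a : ℝ → ℝ) : ℂ :=
  ∑' j : {j : Fin (2 * k) → ℤ // ∑ i, j i = 0}, zetaTerm k a j


open scoped ComplexOrder in
lemma zi_spec {ι : Type*} [Fintype ι] [DecidableEq ι] (A : Matrix ι ι ℂ) (hA : A.IsHermitian) :
    ∃ U : Matrix ι ι ℂ, Matrix.conjTranspose U * U = 1 ∧ U * Matrix.conjTranspose U = 1 ∧
      A = U * Matrix.diagonal (fun i => (hA.eigenvalues i : ℂ)) * Matrix.conjTranspose U := by
  refine ⟨(hA.eigenvectorUnitary : Matrix ι ι ℂ), ?_, ?_, ?_⟩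
  · exact Unitary.coe_star_mul_self hA.eigenvectorUnitary
  · exact Unitary.coe_mul_star_self hA.eigenvectorUnitary
  · have h := hA.spectral_theorem
    rw [Unitary.conjStarAlgAut_apply] at h
    exact h

lemma zi_conj_pow {ι : Type*} [Fintype ι] [DecidableEq ι] (U V D : Matrix ι ι ℂ)
    (h : V * U = 1) (p : ℕ) (h' : U * V = 1) : (U * D * V) ^ p = U * D ^ p * V := by
  induction p with
  | zero => simp [h']
  | succ p ih =>
    rw [pow_succ, ih, pow_succ]
    calc U * D ^ p * V * (U * D * V) = U * D ^ p * (V * U) * D * V := by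
          simp only [Matrix.mul_assoc]
      _ = _ := by rw [h]; simp only [Matrix.mul_assoc, Matrix.mul_one]

lemma zi_trace_comm_pow {ι : Type*} [Fintype ι] [DecidableEq ι] (X Y : Matrix ι ι ℂ) (p : ℕ) :
    Matrix.trace ((X * Y) ^ p) = Matrix.trace ((Y * X) ^ p) := by
  cases p with
  | zero => simp
  | succ p =>
    have h : ∀ q : ℕ, (X * Y) ^ q * X = X * (Y * X) ^ q := by
      intro q
      induction q with
      | zero => simp
      | succ q ih =>
        rw [pow_succ', Matrix.mul_assoc, ih, pow_succ']
        simp only [Matrix.mul_assoc]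
    rw [pow_succ, ← Matrix.mul_assoc, h, Matrix.mul_assoc, Matrix.trace_mul_comm, Matrix.mul_assoc,
      ← pow_succ]

open scoped ComplexOrder in
lemma zi_diag_pow {ι : Type*} [Fintype ι] [DecidableEq ι] (C : Matrix ι ι ℂ) (hC : C.PosSemidef)
    (p : ℕ) (j : ι) : ((C j j).re) ^ p ≤ ((C ^ p) j j).re := by
  obtain ⟨V, h1, h2, h3⟩ := zi_spec C hC.1
  set γ := hC.1.eigenvalues with hγ
  have hpos : ∀ i, 0 ≤ γ i := fun i => hC.eigenvalues_nonneg i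
  have key : ∀ q : ℕ, ((C ^ q) j j).re = ∑ i, Complex.normSq (V j i) * (γ i) ^ q := by
    intro q
    rw [h3, zi_conj_pow _ _ _ h1 _ h2, Matrix.diagonal_pow, Matrix.mul_apply, Complex.re_sum]
    refine Finset.sum_congr rfl fun i _ => ?_
    rw [Matrix.mul_diagonal, Matrix.conjTranspose_apply, Pi.pow_apply, mul_right_comm]
    have : V j i * star (V j i) = (Complex.normSq (V j i) : ℂ) := Complex.mul_conj _
    rw [this, ← Complex.ofReal_pow, ← Complex.ofReal_mul, Complex.ofReal_re]
  have k0 : ∑ i, Complex.normSq (V j i) = 1 := by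
    have := key 0
    simpa using this.symm
  have k1 : (C j j).re = ∑ i, Complex.normSq (V j i) * γ i := by simpa using key 1
  rw [key, k1]
  exact Real.pow_arith_mean_le_arith_mean_pow _ _ _ (fun i _ => Complex.normSq_nonneg _) k0
    (fun i _ => hpos i) p
  
open scoped ComplexOrder in
lemma zi_trace_ineq {ι : Type*} [Fintype ι] [DecidableEq ι] (A B : Matrix ι ι ℂ)
    (h1 : (B - A).PosSemidef) (h2 : (B + A).PosSemidef) (hA : A.IsHermitian) (hB : B.PosSemidef)
    (p : ℕ) (hp : Even p) : (Matrix.trace (A ^ p)).re ≤ (Matrix.trace (B ^ p)).re := by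
  obtain ⟨U, u1, u2, u3⟩ := zi_spec A hA
  set α := hA.eigenvalues
  set D := Matrix.diagonal (fun i => (α i : ℂ)) with hD
  set C := Matrix.conjTranspose U * B * U with hCdef
  have hC : C.PosSemidef := hB.conjTranspose_mul_mul_same U
  have hDA : Matrix.conjTranspose U * A * U = D := by
    rw [u3]
    calc _ = (Matrix.conjTranspose U * U) * D * (Matrix.conjTranspose U * U) := by
          simp only [Matrix.mul_assoc]
      _ = D := by rw [u1]; simp
  have hm : (C - D).PosSemidef := by
    have := h1.conjTranspose_mul_mul_same U
    rwa [Matrix.mul_sub, Matrix.sub_mul, hDA] at this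
  have hpl : (C + D).PosSemidef := by
    have := h2.conjTranspose_mul_mul_same U
    rwa [Matrix.mul_add, Matrix.add_mul, hDA] at this
  have tA : Matrix.trace (A ^ p) = Matrix.trace (D ^ p) := by
    rw [u3, zi_conj_pow _ _ _ u1 _ u2, Matrix.trace_mul_comm, ← Matrix.mul_assoc, u1, Matrix.one_mul]
  have tB : Matrix.trace (B ^ p) = Matrix.trace (C ^ p) := by
    rw [hCdef, zi_conj_pow _ _ _ u2 _ u1, Matrix.trace_mul_comm, ← Matrix.mul_assoc, u2,
      Matrix.one_mul]
  rw [tA, tB, hD, Matrix.diagonal_pow, Matrix.trace, Matrix.trace, Complex.re_sum, Complex.re_sum]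
  refine Finset.sum_le_sum fun j _ => ?_
  have e1 : (0:ℝ) ≤ (C j j).re - α j := by
    have := (Complex.le_def.1 (hm.diag_nonneg (i := j))).1
    simpa [hD] using this
  have e2 : (0:ℝ) ≤ (C j j).re + α j := by
    have := (Complex.le_def.1 (hpl.diag_nonneg (i := j))).1
    simpa [hD] using this
  have e3 : |α j| ≤ (C j j).re := abs_le.2 ⟨by linarith, by linarith⟩
  calc (Matrix.diag (Matrix.diagonal ((fun i => (α i : ℂ)) ^ p)) j).re = |α j| ^ p := by
        rw [Matrix.diag_diagonal, Pi.pow_apply, ← Complex.ofReal_pow, Complex.ofReal_re,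
          hp.pow_abs]
    _ ≤ (C j j).re ^ p := pow_le_pow_left₀ (abs_nonneg _) e3 p
    _ ≤ _ := zi_diag_pow C hC p j

open scoped ComplexOrder MatrixOrder in
lemma zi_trace_main {ι : Type*} [Fintype ι] [DecidableEq ι] (T : Matrix ι ι ℂ) (hT : T.PosSemidef)
    (d : ι → ℝ) (p : ℕ) (hp : Even p) :
    (Matrix.trace ((T * Matrix.diagonal (fun i => (d i : ℂ))) ^ p)).re ≤
      (Matrix.trace ((T * Matrix.diagonal (fun i => ((|d i| : ℝ) : ℂ))) ^ p)).re := by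
  obtain ⟨S, rfl⟩ := CStarAlgebra.nonneg_iff_eq_star_mul_self.mp hT.nonneg
  rw [Matrix.mul_assoc, Matrix.mul_assoc, zi_trace_comm_pow, zi_trace_comm_pow (star S)]
  have hps : ∀ e : ι → ℝ, (∀ i, 0 ≤ e i) →
      (S * Matrix.diagonal (fun i => (e i : ℂ)) * star S).PosSemidef := by
    intro e he
    exact (Matrix.PosSemidef.diagonal
      (fun i => by simpa using he i)).mul_mul_conjTranspose_same S
  apply zi_trace_ineq _ _ _ _ _ _ p hp
  · convert hps (fun i => |d i| - d i) (fun i => sub_nonneg.2 (le_abs_self _)) using 1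
    rw [← Matrix.sub_mul, ← Matrix.mul_sub, Matrix.diagonal_sub]
    simp
  · convert hps (fun i => |d i| + d i) (fun i => by linarith [neg_abs_le (d i)]) using 1
    rw [← Matrix.add_mul, ← Matrix.mul_add, Matrix.diagonal_add]
    simp
  · apply Matrix.isHermitian_mul_mul_conjTranspose
    apply Matrix.isHermitian_diagonal_of_self_adjoint
    ext i
    simp
  · exact hps _ (fun i => abs_nonneg _)

lemma zi_walk {ι : Type*} [Fintype ι] [DecidableEq ι] (M : Matrix ι ι ℂ) (p : ℕ) :
    ∀ f : ι → ι → ℂ, ∑ w : Fin (p + 1) → ι, f (w 0) (w (Fin.last p)) *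
      ∏ i : Fin p, M (w i.castSucc) (w i.succ) = ∑ x, ∑ y, f x y * (M ^ p) x y := by
  induction p with
  | zero =>
    intro f
    rw [← (Fin.consEquiv (fun _ : Fin 1 => ι)).sum_comp, Fintype.sum_prod_type]
    simp [Matrix.one_apply, Fin.consEquiv]
  | succ p ih =>
    intro f
    rw [← (Fin.consEquiv (fun _ : Fin (p + 2) => ι)).sum_comp, Fintype.sum_prod_type]
    refine Finset.sum_congr rfl fun x _ => ?_
    have := ih (fun a b => f x b * M x a)
    calc _ = ∑ w : Fin (p + 1) → ι, f x (w (Fin.last p)) * M x (w 0) *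
          ∏ i : Fin p, M (w i.castSucc) (w i.succ) := by
          refine Finset.sum_congr rfl fun w _ => ?_
          rw [Fin.prod_univ_succ]
          simp only [Fin.consEquiv, Equiv.coe_fn_mk, Fin.cons_zero, Fin.cons_succ,
            Fin.castSucc_zero, ← Fin.succ_castSucc, ← Fin.succ_last, mul_assoc]
      _ = _ := by
          rw [this, Finset.sum_comm]
          refine Finset.sum_congr rfl fun y _ => ?_
          rw [pow_succ', Matrix.mul_apply, Finset.mul_sum]
          refine Finset.sum_congr rfl fun z _ => ?_
          ring

lemma zi_trace_walk {ι : Type*} [Fintype ι] [DecidableEq ι] (M : Matrix ι ι ℂ) (p : ℕ) :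
    Matrix.trace (M ^ (p + 1)) = ∑ w : Fin (p + 1) → ι, ∏ i, M (w i) (w (i + 1)) := by
  have := zi_walk M p (fun x y => M y x)
  rw [pow_succ, Matrix.trace]
  calc _ = ∑ x, ∑ y, M y x * (M ^ p) x y := by
        refine Finset.sum_congr rfl fun x _ => ?_
        rw [Matrix.diag_apply, Matrix.mul_apply]
        exact Finset.sum_congr rfl fun y _ => mul_comm _ _
    _ = _ := by
        rw [← this]
        refine Finset.sum_congr rfl fun w _ => ?_
        rw [Fin.prod_univ_castSucc, mul_comm]
        simp [Fin.coeSucc_eq_succ]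


lemma zi_fcoef_deriv (u : ℝ → ℂ) (hu : ContDiff ℝ (⊤ : ℕ∞) u)
    (hper : Function.Periodic u (2 * Real.pi)) (j : ℤ) :
    fCoef (deriv u) j = Complex.I * j * fCoef u j := by
  have hd : ∀ x, HasDerivAt u (deriv u x) x := fun x =>
    (hu.differentiable (by simp) x).hasDerivAt
  have hdc : Continuous (deriv u) := hu.continuous_deriv (by simp)
  have he : ∀ x : ℝ, HasDerivAt (fun θ : ℝ => Complex.exp (-Complex.I * j * θ))
      (Complex.exp (-Complex.I * j * x) * (-Complex.I * j)) x := by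
    intro x
    have h1 : HasDerivAt (fun θ : ℝ => -Complex.I * j * (θ : ℂ)) (-Complex.I * j) x := by
      simpa using (Complex.ofRealCLM.hasDerivAt (x := x)).const_mul (-Complex.I * (j : ℂ))
    exact h1.cexp
  have hi := intervalIntegral.integral_mul_deriv_eq_deriv_mul (a := 0) (b := 2 * Real.pi)
    (u := fun θ : ℝ => Complex.exp (-Complex.I * j * θ)) (v := u)
    (u' := fun x : ℝ => Complex.exp (-Complex.I * j * x) * (-Complex.I * j)) (v' := deriv u)
    (fun x _ => he x) (fun x _ => hd x)
    (Continuous.intervalIntegrable (by fun_prop) _ _) (hdc.intervalIntegrable _ _)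
  have hb : Complex.exp (-Complex.I * j * ((2 * Real.pi : ℝ) : ℂ)) = 1 := by
    rw [Complex.exp_eq_one_iff]
    exact ⟨-j, by push_cast; ring⟩
  have hu2 : u (2 * Real.pi) = u 0 := by simpa using hper 0
  rw [hb, hu2] at hi
  unfold fCoef
  have e1 : (fun θ : ℝ => deriv u θ * Complex.exp (-Complex.I * j * θ)) =
      fun θ : ℝ => Complex.exp (-Complex.I * j * θ) * deriv u θ := by
    ext θ; ring
  have e2 : (fun x : ℝ => Complex.exp (-Complex.I * j * x) * (-Complex.I * j) * u x) =
      fun x : ℝ => (-Complex.I * j) * (u x * Complex.exp (-Complex.I * j * x)) := by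
    ext θ; ring
  rw [e1, hi, e2, intervalIntegral.integral_const_mul]
  simp only [Complex.ofReal_zero, mul_zero, Complex.exp_zero]
  ring

lemma zi_decay (p : ℕ) : ∀ u : ℝ → ℂ, ContDiff ℝ (⊤ : ℕ∞) u →
    Function.Periodic u (2 * Real.pi) →
    ∃ C : ℝ, ∀ j : ℤ, (1 + |(j : ℝ)|) ^ p * ‖fCoef u j‖ ≤ C := by
  induction p with
  | zero =>
    intro u hu _
    refine ⟨‖(((2 * Real.pi)⁻¹ : ℝ) : ℂ)‖ * ∫ θ in (0:ℝ)..(2 * Real.pi), ‖u θ‖, fun j => ?_⟩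
    rw [pow_zero, one_mul, fCoef, norm_mul]
    refine mul_le_mul_of_nonneg_left ?_ (norm_nonneg _)
    refine (intervalIntegral.norm_integral_le_integral_norm (by positivity : (0:ℝ) ≤ 2 * Real.pi)).trans (le_of_eq ?_)
    congr 1
    ext θ
    have : -Complex.I * j * θ = ((-(j * θ) : ℝ) : ℂ) * Complex.I := by push_cast; ring
    rw [norm_mul, this, Complex.norm_exp_ofReal_mul_I, mul_one]
  | succ p ih =>
    intro u hu hper
    obtain ⟨C, hC⟩ := ih u hu hper
    obtain ⟨C', hC'⟩ := ih (deriv u) (by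
      have : ContDiff ℝ (((⊤ : ℕ∞) : WithTop ℕ∞) + 1) u := by simpa using hu
      exact ((contDiff_succ_iff_deriv).1 this).2.2) (by
      intro x
      rw [← deriv_comp_add_const u]
      congr 1
      ext y
      exact hper y)
    refine ⟨C + C', fun j => ?_⟩
    have h1 := hC j
    have h2 := hC' j
    rw [zi_fcoef_deriv u hu hper, norm_mul, norm_mul, Complex.norm_I, one_mul,
      Complex.norm_intCast] at h2
    calc _ = (1 + |(j : ℝ)|) ^ p * ‖fCoef u j‖ + (1 + |(j : ℝ)|) ^ p * (|(j : ℝ)| * ‖fCoef u j‖) := by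
          ring
      _ ≤ _ := add_le_add h1 h2

open scoped ComplexOrder in
lemma zi_toeplitz {ι : Type*} [Fintype ι] [DecidableEq ι] (a : ℝ → ℝ) (hc : Continuous a)
    (hpos : ∀ θ, 0 < a θ) (φ : ι → ℤ) :
    (Matrix.of (fun x y : ι => fCoef (fun θ => (a θ : ℂ)) (φ y - φ x))).PosSemidef := by
  refine Matrix.PosSemidef.of_dotProduct_mulVec_nonneg ?_ ?_
  · ext x y
    rw [Matrix.conjTranspose_apply, Matrix.of_apply, Matrix.of_apply]
    unfold fCoef
    change (starRingEnd ℂ) _ = _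
    rw [map_mul, ← intervalIntegral.intervalIntegral_conj]
    congr 1
    · rw [Complex.conj_ofReal]
    · congr 1
      ext θ
      simp only [map_mul, ← Complex.exp_conj, map_neg, Complex.conj_I, Complex.conj_ofReal,
        map_intCast]
      congr 2
      push_cast
      ring
  · intro v
    let s : ℝ → ℂ := fun θ => ∑ y, v y * Complex.exp (-Complex.I * φ y * θ)
    have hs : Continuous s := by fun_prop
    have : star v ⬝ᵥ (Matrix.of (fun x y : ι => fCoef (fun θ => (a θ : ℂ)) (φ y - φ x))).mulVec v
        = (((2 * Real.pi)⁻¹ * ∫ θ in (0:ℝ)..(2 * Real.pi), a θ * Complex.normSq (s θ) : ℝ) : ℂ) := by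
      have h1 : ∀ θ : ℝ, ((a θ * Complex.normSq (s θ) : ℝ) : ℂ) = ∑ x, ∑ y, star (v x) * v y *
          ((a θ : ℂ) * Complex.exp (-Complex.I * ((φ y - φ x : ℤ) : ℂ) * θ)) := by
        intro θ
        have hst : (starRingEnd ℂ) (s θ) = ∑ x, star (v x) * Complex.exp (Complex.I * φ x * θ) := by
          simp only [s, map_sum, map_mul, ← Complex.exp_conj, map_neg, Complex.conj_I,
            Complex.conj_ofReal, map_intCast, neg_neg]
          rfl
        rw [Complex.ofReal_mul, Complex.normSq_eq_conj_mul_self, hst, Finset.sum_mul_sum,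
          Finset.mul_sum]
        refine Finset.sum_congr rfl fun x _ => ?_
        rw [Finset.mul_sum]
        refine Finset.sum_congr rfl fun y _ => ?_
        have : Complex.exp (-Complex.I * ((φ y - φ x : ℤ) : ℂ) * θ) =
            Complex.exp (Complex.I * φ x * θ) * Complex.exp (-Complex.I * φ y * θ) := by
          rw [← Complex.exp_add]
          congr 1
          push_cast
          ring
        rw [this]
        ring
      rw [Complex.ofReal_mul, ← intervalIntegral.integral_ofReal]
      simp_rw [h1]
      rw [intervalIntegral.integral_finsetSum]
      · simp only [dotProduct, Matrix.mulVec, Matrix.of_apply, Finset.mul_sum]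
        refine Finset.sum_congr rfl fun x _ => ?_
        rw [intervalIntegral.integral_finsetSum, Finset.mul_sum]
        · refine Finset.sum_congr rfl fun y _ => ?_
          rw [intervalIntegral.integral_const_mul, fCoef, Pi.star_apply]
          push_cast
          ring
        · intro y _
          exact Continuous.intervalIntegrable (by fun_prop) _ _
      · intro x _
        exact Continuous.intervalIntegrable (by fun_prop) _ _
    rw [this]
    have h0 : 0 ≤ ∫ θ in (0:ℝ)..(2 * Real.pi), a θ * Complex.normSq (s θ) :=
      intervalIntegral.integral_nonneg (by positivity)
        (fun θ _ => mul_nonneg (hpos θ).le (Complex.normSq_nonneg _))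
    rw [Complex.zero_le_real]
    positivity


lemma zi_Iio_succ {p : ℕ} (j : Fin (p + 1) → ℤ) (i : Fin p) :
    ∑ l ∈ Finset.Iio i.succ, j l = ∑ l ∈ Finset.Iio i.castSucc, j l + j i.castSucc := by
  have : Finset.Iio i.succ = insert i.castSucc (Finset.Iio i.castSucc) := by
    ext l
    simp only [Finset.mem_Iio, Finset.mem_insert, Fin.lt_def, Fin.ext_iff, Fin.val_succ,
      Fin.val_castSucc]
    omega
  rw [this, Finset.sum_insert (by simp), add_comm]

lemma zi_Iio_zero {p : ℕ} (j : Fin (p + 1) → ℤ) :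
    ∑ l ∈ Finset.Iio (0 : Fin (p + 1)), j l = 0 := by
  apply Finset.sum_eq_zero
  intro l hl
  simp at hl

lemma zi_tele {p : ℕ} (w : Fin (p + 1) → ℤ) (i : Fin (p + 1)) :
    w 0 + ∑ l ∈ Finset.Iio i, (w (l + 1) - w l) = w i := by
  induction i using Fin.induction with
  | zero => rw [zi_Iio_zero (fun l => w (l + 1) - w l), add_zero]
  | succ i ih =>
    rw [zi_Iio_succ (fun l => w (l + 1) - w l), ← add_assoc, ih, Fin.coeSucc_eq_succ]
    ring

lemma zi_step {p : ℕ} (j : Fin (p + 1) → ℤ) (hj : ∑ i, j i = 0) (n : ℤ) (i : Fin (p + 1)) :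
    (n + ∑ l ∈ Finset.Iio (i + 1), j l) - (n + ∑ l ∈ Finset.Iio i, j l) = j i := by
  induction i using Fin.lastCases with
  | last =>
    rw [Fin.last_add_one, zi_Iio_zero]
    have h : ∑ l ∈ Finset.Iio (Fin.last p), j l + j (Fin.last p) = 0 := by
      rw [← hj]
      have : (Finset.univ : Finset (Fin (p + 1))) =
          insert (Fin.last p) (Finset.Iio (Fin.last p)) := by
        ext l
        simp only [Finset.mem_Iio, Finset.mem_insert, Finset.mem_univ, true_iff]
        exact (eq_or_lt_of_le (Fin.le_last l))
      rw [this, Finset.sum_insert (by simp), add_comm]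
    linarith
  | cast i =>
    rw [Fin.coeSucc_eq_succ, zi_Iio_succ]
    ring

/-- Closed walks on `ℤ` correspond to (increments with zero sum, starting point). -/
def ziEquiv (p : ℕ) :
    {j : Fin (p + 1) → ℤ // ∑ i, j i = 0} × ℤ ≃ (Fin (p + 1) → ℤ) where
  toFun x := fun i => x.2 + ∑ l ∈ Finset.Iio i, x.1.val l
  invFun w := (⟨fun i => w (i + 1) - w i, by
    rw [Finset.sum_sub_distrib, sub_eq_zero]
    exact Equiv.sum_comp (Equiv.addRight (1 : Fin (p + 1))) w⟩, w 0)
  left_inv x := by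
    refine Prod.ext (Subtype.ext (funext fun i => ?_)) ?_
    · exact zi_step x.1.val x.1.2 x.2 i
    · simp only [zi_Iio_zero, add_zero]
  right_inv w := funext fun i => zi_tele w i

/-- The weight of a closed walk. -/
def ziG (c : ℤ → ℂ) (p : ℕ) (w : Fin (p + 1) → ℤ) : ℂ :=
  (((|∏ i, w i| - ∏ i, w i : ℤ) : ℝ) : ℂ) * ∏ i, c (w (i + 1) - w i)

lemma ziG_equiv (c : ℤ → ℂ) (p : ℕ) (x : {j : Fin (p + 1) → ℤ // ∑ i, j i = 0} × ℤ) :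
    ziG c p (ziEquiv p x) = (((|prodPoly (p + 1) x.1.val x.2| - prodPoly (p + 1) x.1.val x.2 : ℤ)
      : ℝ) : ℂ) * ∏ i, c (x.1.val i) := by
  unfold ziG prodPoly
  congr 1
  refine Finset.prod_congr rfl fun i _ => ?_
  congr 1
  exact zi_step x.1.val x.1.2 x.2 i

lemma zi_box (a : ℝ → ℝ) (hc : Continuous a) (hpos : ∀ θ, 0 < a θ) (p : ℕ) (hp : Even (p + 1))
    (s : Finset ℤ) :
    0 ≤ (∑ w : Fin (p + 1) → s, ziG (fCoef (fun θ => (a θ : ℂ))) p (fun i => (w i : ℤ))).re := by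
  have hT := zi_toeplitz a hc hpos (fun x : s => (x : ℤ))
  have h := zi_trace_main _ hT (fun x : s => ((x : ℤ) : ℝ)) (p + 1) hp
  rw [zi_trace_walk, zi_trace_walk] at h
  rw [← sub_nonneg, ← Complex.sub_re, ← Finset.sum_sub_distrib] at h
  convert h using 2
  refine Finset.sum_congr rfl fun w _ => ?_
  simp only [Matrix.mul_diagonal, Matrix.of_apply, Finset.prod_mul_distrib, ziG]
  have e : ∀ f : s → ℂ, ∏ i, f (w (i + 1)) = ∏ i, f (w i) := fun f =>
    Equiv.prod_comp (Equiv.addRight (1 : Fin (p + 1))) (fun i => f (w i))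
  rw [e (fun x => (((x : ℤ) : ℝ) : ℂ)), e (fun x => ((|((x : ℤ) : ℝ)| : ℝ) : ℂ)), ← mul_sub, mul_comm]
  congr 1
  rw [Finset.abs_prod]
  push_cast
  rfl

lemma zi_conj_fcoef (a : ℝ → ℝ) (j : ℤ) :
    (starRingEnd ℂ) (fCoef (fun θ => (a θ : ℂ)) j) = fCoef (fun θ => (a θ : ℂ)) (-j) := by
  unfold fCoef
  rw [map_mul, ← intervalIntegral.intervalIntegral_conj]
  congr 1
  · rw [Complex.conj_ofReal]
  · congr 1
    ext θ
    simp only [map_mul, ← Complex.exp_conj, map_neg, Complex.conj_I, Complex.conj_ofReal,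
      map_intCast]
    congr 2
    push_cast
    ring

lemma ziG_conj (a : ℝ → ℝ) (p : ℕ) (w : Fin (p + 1) → ℤ) :
    (starRingEnd ℂ) (ziG (fCoef (fun θ => (a θ : ℂ))) p w) =
      ziG (fCoef (fun θ => (a θ : ℂ))) p (fun i => w (-i)) := by
  unfold ziG
  have e1 : ∏ i, w (-i) = ∏ i, w i := Equiv.prod_comp (Equiv.neg (Fin (p + 1))) w
  rw [map_mul, map_prod, Complex.conj_ofReal, e1]
  congr 1
  simp only [zi_conj_fcoef, neg_sub]
  have := Equiv.prod_comp (Equiv.subLeft (-1 : Fin (p + 1)))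
    (fun i => fCoef (fun θ => (a θ : ℂ)) (w i - w (i + 1)))
  rw [← this]
  refine Finset.prod_congr rfl fun i _ => ?_
  simp only [Equiv.subLeft_apply]
  have e2 : -1 - i = -(i + 1) := by abel
  have e3 : -1 - i + 1 = -i := by abel
  rw [e3, e2]


lemma zi_summable_prod (f : ℤ → ℝ) (h0 : ∀ j, 0 ≤ f j) (hf : Summable f) (m : ℕ) :
    Summable (fun j : Fin m → ℤ => ∏ i, f (j i)) := by
  induction m with
  | zero => exact (hasSum_fintype _).summable
  | succ m ih =>
    rw [← (Fin.consEquiv (fun _ : Fin (m + 1) => ℤ)).summable_iff]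
    have := hf.mul_of_nonneg ih h0 (fun j => Finset.prod_nonneg fun i _ => h0 _)
    refine this.congr fun x => ?_
    simp [Fin.consEquiv, Fin.prod_univ_succ]

lemma zi_summable_sq : Summable (fun n : ℤ => ((1 + |(n : ℝ)|) ^ 2)⁻¹) := by
  have h : Summable (fun n : ℕ => ((1 + |((n : ℤ) : ℝ)|) ^ 2)⁻¹) := by
    have := (summable_nat_add_iff 1).2 (Real.summable_nat_pow_inv.2 (le_refl 2 : 1 < 2))
    refine this.congr fun n => ?_
    simp [abs_of_nonneg, add_comm]
  refine Summable.of_nat_of_neg h ?_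
  simpa using h

lemma zi_one_add_sum {m : ℕ} (s : Finset (Fin m)) (x : Fin m → ℝ) (hx : ∀ i, 0 ≤ x i) :
    1 + ∑ i ∈ s, x i ≤ ∏ i ∈ s, (1 + x i) := by
  induction s using Finset.cons_induction with
  | empty => simp
  | cons i s hi ih =>
    rw [Finset.sum_cons, Finset.prod_cons]
    have h1 : 0 ≤ ∑ i ∈ s, x i := Finset.sum_nonneg fun i _ => hx i
    nlinarith [hx i, mul_nonneg (hx i) h1, mul_le_mul_of_nonneg_left ih (hx i)]

lemma zi_poly_bound {m : ℕ} (hm : Even m) (j : Fin m → ℤ) (n : ℤ) :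
    ((|prodPoly m j n| - prodPoly m j n : ℤ) : ℝ) ≤
      2 ^ (m + 1) * (((1 + |(n : ℝ)|) ^ 2)⁻¹ * ∏ i, (1 + |(j i : ℝ)|) ^ (m + 2)) := by
  have hR : 0 ≤ (2:ℝ) ^ (m + 1) * (((1 + |(n : ℝ)|) ^ 2)⁻¹ * ∏ i, (1 + |(j i : ℝ)|) ^ (m + 2)) :=
    mul_nonneg (by positivity) (mul_nonneg (by positivity)
      (Finset.prod_nonneg fun i _ => by positivity))
  set L : ℤ := ∑ i, |j i| with hL
  have hL0 : 0 ≤ L := Finset.sum_nonneg fun i _ => abs_nonneg _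
  have hS : ∀ i, |∑ l ∈ Finset.Iio i, j l| ≤ L := fun i =>
    (Finset.abs_sum_le_sum_abs _ _).trans
      (Finset.sum_le_sum_of_subset_of_nonneg (Finset.subset_univ _) fun _ _ _ => abs_nonneg _)
  by_cases hP : 0 ≤ prodPoly m j n
  · rw [abs_of_nonneg hP, sub_self, Int.cast_zero]
    exact hR
  have hn : |n| ≤ L := by
    by_contra hcon
    push Not at hcon
    apply hP
    unfold prodPoly
    rcases lt_abs.1 hcon with h | h
    · refine Finset.prod_nonneg fun i _ => ?_
      have := (abs_le.1 (hS i)).1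
      linarith
    · have e : ∏ i : Fin m, (n + ∑ l ∈ Finset.Iio i, j l) =
          ∏ i : Fin m, (-(n + ∑ l ∈ Finset.Iio i, j l)) := by
        rw [Finset.prod_neg, Finset.card_univ, Fintype.card_fin, hm.neg_one_pow, one_mul]
      rw [e]
      refine Finset.prod_nonneg fun i _ => ?_
      have := (abs_le.1 (hS i)).2
      linarith
  have hPb : |prodPoly m j n| ≤ (2 * (1 + L)) ^ m := by
    unfold prodPoly
    rw [Finset.abs_prod]
    calc _ ≤ ∏ i : Fin m, (2 * (1 + L)) := by
          refine Finset.prod_le_prod (fun i _ => abs_nonneg _) fun i _ => ?_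
          have := abs_add_le n (∑ l ∈ Finset.Iio i, j l)
          have := hS i
          linarith
      _ = _ := by simp
  have h1 : ((|prodPoly m j n| - prodPoly m j n : ℤ) : ℝ) ≤ 2 * (2 * (1 + (L : ℝ))) ^ m := by
    have : |prodPoly m j n| - prodPoly m j n ≤ 2 * (2 * (1 + L)) ^ m := by
      have := neg_abs_le (prodPoly m j n)
      linarith
    exact_mod_cast this
  have hnR : 1 + |(n : ℝ)| ≤ 1 + (L : ℝ) := by
    have : (|n| : ℤ) ≤ L := hn
    have h : ((|n| : ℤ) : ℝ) ≤ (L : ℝ) := by exact_mod_cast this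
    rw [Int.cast_abs] at h
    linarith
  have hLR : 1 + (L : ℝ) ≤ ∏ i, (1 + |(j i : ℝ)|) := by
    have := zi_one_add_sum Finset.univ (fun i => |(j i : ℝ)|) (fun i => abs_nonneg _)
    simpa [hL] using this
  have hL0R : (0 : ℝ) ≤ L := by exact_mod_cast hL0
  have hone : 1 ≤ ((1 + |(n : ℝ)|) ^ 2)⁻¹ * (1 + (L : ℝ)) ^ 2 := by
    rw [inv_mul_eq_div, one_le_div (by positivity)]
    exact pow_le_pow_left₀ (by positivity) hnR 2
  calc _ ≤ 2 * (2 * (1 + (L : ℝ))) ^ m := h1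
    _ ≤ 2 * (2 * (1 + (L : ℝ))) ^ m * (((1 + |(n : ℝ)|) ^ 2)⁻¹ * (1 + (L : ℝ)) ^ 2) :=
        le_mul_of_one_le_right (by positivity) hone
    _ = 2 ^ (m + 1) * (((1 + |(n : ℝ)|) ^ 2)⁻¹ * (1 + (L : ℝ)) ^ (m + 2)) := by
        rw [mul_pow]; ring
    _ ≤ _ := by
        rw [Finset.prod_pow]
        gcongr

lemma zi_summable (c : ℤ → ℂ) (p : ℕ) (hp : Even (p + 1)) (C : ℝ)
    (hC : ∀ j : ℤ, (1 + |(j : ℝ)|) ^ (p + 1 + 2 + 2) * ‖c j‖ ≤ C) :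
    Summable (fun x => ‖ziG c p (ziEquiv p x)‖) := by
  have hg : Summable (fun j : ℤ => (1 + |(j : ℝ)|) ^ (p + 1 + 2) * ‖c j‖) := by
    refine Summable.of_nonneg_of_le (fun j => by positivity) (fun j => ?_)
      (zi_summable_sq.mul_left C)
    rw [← div_eq_mul_inv, le_div_iff₀ (by positivity)]
    calc _ = (1 + |(j : ℝ)|) ^ (p + 1 + 2 + 2) * ‖c j‖ := by ring
      _ ≤ C := hC j
  have h1 := zi_summable_prod _ (fun j => by positivity) hg (p + 1)
  have h2 := h1.comp_injective
    (Subtype.val_injective (p := fun j : Fin (p + 1) → ℤ => ∑ i, j i = 0))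
  have h3 := (h2.mul_of_nonneg zi_summable_sq
    (fun j => Finset.prod_nonneg fun i _ => by positivity)
    (fun n => by positivity)).mul_left ((2:ℝ) ^ (p + 1 + 1))
  refine Summable.of_nonneg_of_le (fun x => norm_nonneg _) (fun x => ?_) h3
  rw [ziG_equiv, norm_mul, Complex.norm_real, norm_prod, Real.norm_eq_abs, abs_of_nonneg
    (by exact_mod_cast sub_nonneg.2 (le_abs_self _))]
  refine (mul_le_mul_of_nonneg_right (zi_poly_bound hp x.1.val x.2)
    (Finset.prod_nonneg fun i _ => norm_nonneg _)).trans (le_of_eq ?_)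
  simp only [Function.comp_apply, Finset.prod_mul_distrib]
  ring

lemma zi_main (a : ℝ → ℝ) (ha : ContDiff ℝ (⊤ : ℕ∞) a)
    (haper : Function.Periodic a (2 * Real.pi)) (hapos : ∀ θ, 0 < a θ) (m : ℕ) (hm : Even m)
    (hm0 : 0 < m) (Z : {j : Fin m → ℤ // ∑ i, j i = 0} → ℂ)
    (hZ : ∀ j, Z j = (Ncoef m j.val : ℂ) * ∏ i, fCoef (fun θ => (a θ : ℂ)) (j.val i)) :
    Summable (fun j => ‖Z j‖) ∧ (∑' j, Z j).im = 0 ∧ 0 ≤ (∑' j, Z j).re := by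
  obtain ⟨p, rfl⟩ : ∃ p, m = p + 1 := ⟨m - 1, by omega⟩
  set c := fCoef (fun θ => (a θ : ℂ)) with hc
  obtain ⟨C, hC⟩ := zi_decay (p + 1 + 2 + 2) (fun θ => (a θ : ℂ))
    (Complex.ofRealCLM.contDiff.comp ha) (fun x => by simp only [haper x])
  have hs := zi_summable c p hm C hC
  have hZn : ∀ j, ‖Z j‖ = ∑' n, ‖ziG c p (ziEquiv p (j, n))‖ := by
    intro j
    have e : ∀ n, ‖ziG c p (ziEquiv p (j, n))‖ = ((|prodPoly (p + 1) j.val n| -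
        prodPoly (p + 1) j.val n : ℤ) : ℝ) * ‖∏ i, c (j.val i)‖ := by
      intro n
      rw [ziG_equiv, norm_mul, Complex.norm_real, Real.norm_eq_abs, abs_of_nonneg
        (by exact_mod_cast sub_nonneg.2 (le_abs_self _))]
    simp_rw [e]
    rw [tsum_mul_right, hZ, norm_mul, Complex.norm_real, Real.norm_eq_abs, abs_of_nonneg]
    · rfl
    · exact tsum_nonneg fun n => by exact_mod_cast sub_nonneg.2 (le_abs_self _)
  have hZt : ∀ j, Z j = ∑' n, ziG c p (ziEquiv p (j, n)) := by
    intro j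
    simp_rw [ziG_equiv]
    rw [tsum_mul_right, hZ, Ncoef, Complex.ofReal_tsum]
  have hsum : Summable (fun x => ziG c p (ziEquiv p x)) := hs.of_norm
  have hG : Summable (ziG c p) := (ziEquiv p).summable_iff.1 hsum
  have htot : ∑' j, Z j = ∑' w, ziG c p w := by
    rw [← (ziEquiv p).tsum_eq, hsum.tsum_prod]
    exact tsum_congr hZt
  refine ⟨?_, ?_, ?_⟩
  · simp_rw [hZn]
    exact hs.prod
  · rw [htot, ← Complex.conj_eq_iff_im, Complex.conj_tsum]
    simp_rw [hc, ziG_conj]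
    exact ((Equiv.neg (Fin (p + 1))).arrowCongr (Equiv.refl ℤ)).tsum_eq (ziG c p)
  · rw [htot]
    let S : ℕ → Finset (Fin (p + 1) → ℤ) := fun M =>
      Fintype.piFinset fun _ => Finset.Icc (-(M : ℤ)) M
    have hS : Filter.Tendsto S Filter.atTop Filter.atTop := by
      refine Filter.tendsto_atTop_finset_of_monotone ?_ ?_
      · intro M N hMN w hw
        simp only [S, Fintype.mem_piFinset, Finset.mem_Icc] at hw ⊢
        intro i
        have := hw i
        omega
      · intro w
        refine ⟨∑ i, (w i).natAbs, ?_⟩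
        simp only [S, Fintype.mem_piFinset, Finset.mem_Icc]
        intro i
        have : (w i).natAbs ≤ ∑ i, (w i).natAbs :=
          Finset.single_le_sum (f := fun i => (w i).natAbs) (fun _ _ => Nat.zero_le _)
            (Finset.mem_univ i)
        omega
    have hlim := (Complex.continuous_re.tendsto _).comp (hG.hasSum.comp hS)
    refine ge_of_tendsto' hlim fun M => ?_
    have hb := zi_box a ha.continuous hapos p hm (Finset.Icc (-(M : ℤ)) M)
    change 0 ≤ (∑ w ∈ S M, ziG c p w).re
    refine hb.trans (le_of_eq (congrArg Complex.re ?_))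
    refine Finset.sum_bij (fun (w : Fin (p + 1) → (Finset.Icc (-(M : ℤ)) (M : ℤ) : Finset ℤ)) _ =>
      (fun i => ((w i : _) : ℤ) : Fin (p + 1) → ℤ)) ?_ ?_ ?_ ?_
    · intro w _
      simp only [S, Fintype.mem_piFinset]
      exact fun i => (w i).2
    · intro w _ w' _ h
      funext i
      exact Subtype.ext (congrFun h i)
    · intro w hw
      simp only [S, Fintype.mem_piFinset] at hw
      exact ⟨fun i => ⟨w i, hw i⟩, Finset.mem_univ _, rfl⟩
    · intro w _
      rfl

/-- **Nonnegativity of zeta-invariants (inequality (3.1) of the paper).** For a smooth,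
`2π`-periodic, positive function `a` and `k ≥ 1`, the series defining `Z_k(a)` converges
absolutely, and `Z_k(a)` is a nonnegative real number. -/
theorem zetaInv_nonneg
    (a : ℝ → ℝ) (ha : ContDiff ℝ (⊤ : ℕ∞) a) (haper : Function.Periodic a (2 * Real.pi))
    (hapos : ∀ θ, 0 < a θ) (k : ℕ) (hk : 1 ≤ k) :
    Summable (fun j : {j : Fin (2 * k) → ℤ // ∑ i, j i = 0} => ‖zetaTerm k a j‖) ∧
    (ZetaInv k a).im = 0 ∧ 0 ≤ (ZetaInv k a).re := by
  exact zi_main a ha haper hapos (2 * k) (even_two_mul k) (by omega) (zetaTerm k a) (fun _ => rfl)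
end
end
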